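/- The 2-form F = e^{x/2} c(u) du ∧ (−cos(y e^u / 2) dx + e^u sin(y e^u / 2) dy), for an arbitrary smooth function c(u), satisfies the source-free Maxwell equations dF = 0 and d*F = 0 on the four-dimensional type III vacuum Petrov background ds² = 2 du [dr + ½(x r − x e^x) du] + e^x (dx² + e^{2u} dy²), and F is a VSI (indeed universal) Maxwell field: it solves the equations dF = 0, *d*F̃ = 0 of any generalized electrodynamics, where F̃ is any 2-form constructed from F and its covariant derivatives. -/

import Mathlib

open scoped BigOperators

noncomputable section

namespace VSI

/-! ### Basic setup: tensor fields on an `n`-dimensional coordinate chart -/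

/-- A point of an `n`-dimensional coordinate chart. -/
abbrev Pt (n : ℕ) := Fin n → ℝ

/-- A covariant tensor field of rank `k`, given by its components. -/
abbrev TensorField (n k : ℕ) := Pt n → (Fin k → Fin n) → ℝ

/-- A vector field, given by its components. -/
abbrev VecField (n : ℕ) := Pt n → Fin n → ℝ

/-- A field of `n × n` matrices (e.g. a metric). -/
abbrev MetricField (n : ℕ) := Pt n → Matrix (Fin n) (Fin n) ℝ

/-- Partial derivative of a scalar function along the `a`-th coordinate. -/
def pd {n : ℕ} (f : Pt n → ℝ) (a : Fin n) (x : Pt n) : ℝ :=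
  fderiv ℝ f x (Pi.single a 1)

/-- Partial derivative masked to the transverse directions (coordinates `≥ 2`). -/
def pdT {n : ℕ} (f : Pt n → ℝ) (a : Fin n) (x : Pt n) : ℝ :=
  if 2 ≤ (a : ℕ) then pd f a x else 0

/-- A function on the chart is independent of the coordinate `r` (coordinate number 1). -/
def IndepOfR {n : ℕ} {α : Type*} (f : Pt n → α) : Prop :=
  ∀ x x' : Pt n, (∀ i : Fin n, (i : ℕ) ≠ 1 → x i = x' i) → f x = f x'

/-- A smooth symmetric metric of Lorentzian signature `(-,+,…,+)`. -/
def IsLorentzMetric {n : ℕ} (g : MetricField n) : Prop :=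
  (∀ a b, ContDiff ℝ (⊤ : ℕ∞) fun x => g x a b) ∧ (∀ x, (g x).IsSymm) ∧
  (∀ x, ∃ P : Matrix (Fin n) (Fin n) ℝ, IsUnit P.det ∧
    P.transpose * g x * P = Matrix.diagonal fun i : Fin n => if (i : ℕ) = 0 then (-1 : ℝ) else 1)

/-- Metric pairing of two vectors at a point. -/
def gdot {n : ℕ} (g : MetricField n) (x : Pt n) (X Y : Fin n → ℝ) : ℝ :=
  ∑ a, ∑ b, g x a b * X a * Y b

/-- Index lowering of a vector field. -/
def lower {n : ℕ} (g : MetricField n) (ℓ : VecField n) (x : Pt n) (a : Fin n) : ℝ :=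
  ∑ b, g x a b * ℓ x b

/-- The 1-form (rank-1 covariant tensor field) associated with a vector field. -/
def lowerField {n : ℕ} (g : MetricField n) (ℓ : VecField n) : TensorField n 1 :=
  fun x idx => lower g ℓ x (idx 0)

/-- Christoffel symbols `Γ^a_{bc}` of the Levi-Civita connection of `g`. -/
def christoffel {n : ℕ} (g : MetricField n) (x : Pt n) (a b c : Fin n) : ℝ :=
  (1/2) * ∑ d, (g x)⁻¹ a d *
    (pd (fun y => g y d c) b x + pd (fun y => g y b d) c x - pd (fun y => g y b c) d x)

/-- Covariant derivative of a covariant tensor field; the new (derivative) index is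
the first index of the result. -/
def covD {n k : ℕ} (g : MetricField n) (T : TensorField n k) : TensorField n (k+1) :=
  fun x idx =>
    pd (fun y => T y fun m => idx m.succ) (idx 0) x
    - ∑ m : Fin k, ∑ e : Fin n,
        christoffel g x e (idx 0) (idx m.succ) * T x (Function.update (fun m' => idx m'.succ) m e)

/-- Iterated covariant derivative. -/
def covDIter {n k : ℕ} (g : MetricField n) (T : TensorField n k) : (I : ℕ) → TensorField n (k + I)
  | 0 => T
  | I + 1 => covD g (covDIter g T I)

/-! ### Scalar polynomial invariants and tensor concomitants -/

/-- A scheme describing a polynomial concomitant of a rank-`k` tensor field: a full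
metric contraction of a tensor product of covariant derivatives (of orders `ord j`)
of the field, with `r` free indices left over.  `m` is the number of contracted
index pairs; `slots` enumerates all index slots of the tensor product. -/
structure ConcomScheme (k r : ℕ) where
  N : ℕ
  hN : 0 < N
  ord : Fin N → ℕ
  m : ℕ
  slots : ((Fin m × Bool) ⊕ Fin r) ≃ (Σ j : Fin N, Fin (k + ord j))

/-- The value of a concomitant scheme: all contracted index pairs are contracted with
the inverse metric. -/
def ConcomScheme.value {k r : ℕ} (S : ConcomScheme k r) {n : ℕ} (g : MetricField n)
    (T : TensorField n k) : TensorField n r := fun x free =>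
  ∑ φ : Fin S.m × Bool → Fin n,
    (∏ i : Fin S.m, (g x)⁻¹ (φ (i, false)) (φ (i, true))) *
    ∏ j : Fin S.N, covDIter g T (S.ord j) x
      (fun s => Sum.elim φ free (S.slots.symm ⟨j, s⟩))

/-- All scalar polynomial invariants constructed from `T` and its covariant
derivatives up to order `I` vanish. -/
def IsVSIUpTo {n k : ℕ} (g : MetricField n) (T : TensorField n k) (I : ℕ) : Prop :=
  ∀ S : ConcomScheme k 0, (∀ j, S.ord j ≤ I) → ∀ x v, S.value g T x v = 0

/-- All scalar polynomial invariants of arbitrary order vanish. -/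
def IsVSI {n k : ℕ} (g : MetricField n) (T : TensorField n k) : Prop :=
  ∀ I : ℕ, IsVSIUpTo g T I

/-- All zeroth order scalar polynomial invariants of `T` vanish at the point `x`. -/
def IsVSI0At {n k : ℕ} (g : MetricField n) (T : TensorField n k) (x : Pt n) : Prop :=
  ∀ S : ConcomScheme k 0, (∀ j, S.ord j = 0) → ∀ v, S.value g T x v = 0

/-- A rank-`r` tensor field `G` is (polynomially) constructed from `T`, its covariant
derivatives of arbitrary order and the metric. -/
def IsConstructedFrom {n k r : ℕ} (g : MetricField n) (T : TensorField n k)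
    (G : TensorField n r) : Prop :=
  G ∈ Submodule.span ℝ {G' : TensorField n r | ∃ S : ConcomScheme k r, G' = S.value g T}

/-- A symmetric-2-tensor "correction" to the standard electromagnetic energy-momentum
tensor: constructed from `T` and its covariant derivatives, where each monomial either
contains at least three factors of the field or at least one covariant derivative
(i.e. it comes from a non-Maxwellian term of a generalized electrodynamics). -/
def IsCorrectionTensor {n k : ℕ} (g : MetricField n) (T : TensorField n k)
    (Tc : TensorField n 2) : Prop :=
  Tc ∈ Submodule.span ℝ {G : TensorField n 2 |
    ∃ S : ConcomScheme k 2, (3 ≤ S.N ∨ ∃ j, 1 ≤ S.ord j) ∧ G = S.value g T}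

/-! ### p-forms, type N, Lie derivative -/

def IsAlternating {n k : ℕ} (T : TensorField n k) : Prop :=
  ∀ (x : Pt n) (idx : Fin k → Fin n) (σ : Equiv.Perm (Fin k)),
    T x (idx ∘ σ) = ((Equiv.Perm.sign σ : ℤ) : ℝ) * T x idx

def IsSmoothT {n k : ℕ} (T : TensorField n k) : Prop :=
  ∀ idx, ContDiff ℝ (⊤ : ℕ∞) fun x => T x idx

/-- A smooth differential form (totally antisymmetric covariant tensor field). -/
def IsFormField {n k : ℕ} (T : TensorField n k) : Prop :=
  IsSmoothT T ∧ IsAlternating T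

def IsSmoothVec {n : ℕ} (ℓ : VecField n) : Prop :=
  ∀ a, ContDiff ℝ (⊤ : ℕ∞) fun x => ℓ x a

/-- A (nowhere vanishing, smooth) null vector field. -/
def IsNullField {n : ℕ} (g : MetricField n) (ℓ : VecField n) : Prop :=
  IsSmoothVec ℓ ∧ (∀ x, ℓ x ≠ 0) ∧ ∀ x, gdot g x (ℓ x) (ℓ x) = 0

/-- `ℓ^a F_{a b₁ … b_{p-1}} = 0`. -/
def ContractsFirstZero {n p : ℕ} [NeZero p] (ℓ : VecField n) (F : TensorField n p) : Prop :=
  ∀ (x : Pt n) (v : Fin p → Fin n), (∑ a, ℓ x a * F x (Function.update v 0 a)) = 0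

/-- `ℓ_{[a} F_{b₁ … b_p]} = 0`. -/
def WedgeWithZero {n p : ℕ} (g : MetricField n) (ℓ : VecField n) (F : TensorField n p) : Prop :=
  ∀ (x : Pt n) (idx : Fin (p+1) → Fin n),
    (∑ σ : Equiv.Perm (Fin (p+1)), ((Equiv.Perm.sign σ : ℤ) : ℝ) *
      (lower g ℓ x (idx (σ 0)) * F x (fun m => idx (σ m.succ)))) = 0

/-- The `p`-form `F` is of type N with multiple null direction `ℓ`. -/
def IsTypeN {n p : ℕ} [NeZero p] (g : MetricField n) (F : TensorField n p)
    (ℓ : VecField n) : Prop :=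
  IsNullField g ℓ ∧ ContractsFirstZero ℓ F ∧ WedgeWithZero g ℓ F

/-- Lie derivative of a covariant tensor field along a vector field. -/
def lieD {n k : ℕ} (ℓ : VecField n) (T : TensorField n k) : TensorField n k :=
  fun x idx =>
    (∑ a, ℓ x a * pd (fun y => T y idx) a x)
    + ∑ m : Fin k, ∑ a, pd (fun y => ℓ y a) (idx m) x * T x (Function.update idx m a)

/-! ### Optical properties: geodesic, Kundt -/

/-- `∇_b ℓ_a` (first index is the derivative index). -/
def nablaLow {n : ℕ} (g : MetricField n) (ℓ : VecField n) (x : Pt n) (b a : Fin n) : ℝ :=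
  covD g (lowerField g ℓ) x ![b, a]

/-- `ℓ` is geodesic: `ℓ^b ∇_b ℓ_a ∝ ℓ_a`. -/
def IsGeodesicField {n : ℕ} (g : MetricField n) (ℓ : VecField n) : Prop :=
  ∀ x, ∃ c : ℝ, ∀ a, (∑ b, ℓ x b * nablaLow g ℓ x b a) = c * lower g ℓ x a

/-- `ℓ` is affinely parameterized: `ℓ^b ∇_b ℓ_a = 0`. -/
def IsAffinelyParam {n : ℕ} (g : MetricField n) (ℓ : VecField n) : Prop :=
  ∀ x a, (∑ b, ℓ x b * nablaLow g ℓ x b a) = 0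

/-- `ℓ` is a Kundt null vector field: null, geodesic and with vanishing optical matrix
(expansion-free, shear-free and twist-free). -/
def IsKundt {n : ℕ} (g : MetricField n) (ℓ : VecField n) : Prop :=
  IsNullField g ℓ ∧ IsGeodesicField g ℓ ∧
  ∀ (x : Pt n) (X Y : Fin n → ℝ), gdot g x X (ℓ x) = 0 → gdot g x Y (ℓ x) = 0 →
    (∑ a, ∑ b, X a * Y b * nablaLow g ℓ x b a) = 0

/-! ### Curvature -/

/-- Fully lowered Riemann tensor `R_{abcd}`. -/
def riemann {n : ℕ} (g : MetricField n) : TensorField n 4 := fun x idx =>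
  ∑ e, g x (idx 0) e *
    (pd (fun y => christoffel g y e (idx 3) (idx 1)) (idx 2) x
     - pd (fun y => christoffel g y e (idx 2) (idx 1)) (idx 3) x
     + ∑ f', (christoffel g x e (idx 2) f' * christoffel g x f' (idx 3) (idx 1)
            - christoffel g x e (idx 3) f' * christoffel g x f' (idx 2) (idx 1)))

def ricci {n : ℕ} (g : MetricField n) (x : Pt n) (b d : Fin n) : ℝ :=
  ∑ a, ∑ c, (g x)⁻¹ a c * riemann g x ![a, b, c, d]

def ricciScalar {n : ℕ} (g : MetricField n) (x : Pt n) : ℝ :=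
  ∑ b, ∑ d, (g x)⁻¹ b d * ricci g x b d

def tracelessRicci {n : ℕ} (g : MetricField n) : TensorField n 2 := fun x idx =>
  ricci g x (idx 0) (idx 1) - ricciScalar g x / (n : ℝ) * g x (idx 0) (idx 1)

/-- Weyl tensor `C_{abcd}` (for `n ≥ 3`). -/
def weyl {n : ℕ} (g : MetricField n) : TensorField n 4 := fun x idx =>
  riemann g x idx
  - (1 / ((n : ℝ) - 2)) *
      (g x (idx 0) (idx 2) * ricci g x (idx 3) (idx 1)
       - g x (idx 0) (idx 3) * ricci g x (idx 2) (idx 1)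
       - g x (idx 1) (idx 2) * ricci g x (idx 3) (idx 0)
       + g x (idx 1) (idx 3) * ricci g x (idx 2) (idx 0))
  + (1 / (((n : ℝ) - 1) * ((n : ℝ) - 2))) * ricciScalar g x *
      (g x (idx 0) (idx 2) * g x (idx 3) (idx 1) - g x (idx 0) (idx 3) * g x (idx 2) (idx 1))

/-! ### Null frames, boost weights, algebraic types -/

/-- A null frame at a point: two null vectors `e 0 = ℓ`, `e 1 = n` with `ℓ·n = 1`, and
orthonormal spacelike vectors `e i`, `i ≥ 2`, orthogonal to both. -/
structure NullFrameAt {n : ℕ} [NeZero n] (g : MetricField n) (x : Pt n) where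
  e : Fin n → Fin n → ℝ
  h00 : gdot g x (e 0) (e 0) = 0
  h11 : gdot g x (e 1) (e 1) = 0
  h01 : gdot g x (e 0) (e 1) = 1
  h0i : ∀ i : Fin n, 2 ≤ (i : ℕ) → gdot g x (e 0) (e i) = 0
  h1i : ∀ i : Fin n, 2 ≤ (i : ℕ) → gdot g x (e 1) (e i) = 0
  hij : ∀ i j : Fin n, 2 ≤ (i : ℕ) → 2 ≤ (j : ℕ) →
    gdot g x (e i) (e j) = (if i = j then 1 else 0)

/-- Boost weight of a frame multi-index: `+1` for each contraction with `ℓ = e 0`,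
`-1` for each contraction with `n = e 1`. -/
def bw {n k : ℕ} (a : Fin k → Fin n) : ℤ :=
  ((Finset.univ.filter fun m => (a m : ℕ) = 0).card : ℤ)
  - ((Finset.univ.filter fun m => (a m : ℕ) = 1).card : ℤ)

/-- Frame components of a covariant tensor. -/
def frameComp {n k : ℕ} (T : TensorField n k) (e : Fin n → Fin n → ℝ) (x : Pt n)
    (a : Fin k → Fin n) : ℝ :=
  ∑ idx : Fin k → Fin n, T x idx * ∏ m, e (a m) (idx m)

/-- The tensor field `T` has boost order at most `b` with respect to the null
direction `ℓ`: in any null frame containing `ℓ`, all frame components of boost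
weight `> b` vanish.  `b = 0` is the aligned type II condition, `b = -1` type III. -/
def BoostOrderLE {n k : ℕ} [NeZero n] (g : MetricField n) (ℓ : VecField n)
    (T : TensorField n k) (b : ℤ) : Prop :=
  ∀ (x : Pt n) (fr : NullFrameAt g x), fr.e 0 = ℓ x →
    ∀ a : Fin k → Fin n, b < bw a → frameComp T fr.e x a = 0

/-- `g` is a degenerate Kundt metric with Kundt null direction `ℓ`: `ℓ` is Kundt and
the Riemann tensor together with its covariant derivatives of all orders is of aligned
type II with respect to `ℓ`. -/
def IsDegenerateKundt {n : ℕ} [NeZero n] (g : MetricField n) (ℓ : VecField n) : Prop :=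
  IsKundt g ℓ ∧ ∀ I : ℕ, BoostOrderLE g ℓ (covDIter g (riemann g) I) 0

/-! ### Exterior derivative, Hodge dual, Maxwell equations -/

/-- Exterior derivative (components, no normalization factor). -/
def extD {n k : ℕ} (F : TensorField n k) : TensorField n (k+1) := fun x idx =>
  ∑ m : Fin (k+1), (-1 : ℝ) ^ (m : ℕ) *
    pd (fun y => F y fun i => idx (m.succAbove i)) (idx m) x

/-- Sign of a self-map of `Fin k` (0 if not bijective). -/
def permSign {k : ℕ} (f : Fin k → Fin k) : ℤ :=
  if h : Function.Bijective f then Equiv.Perm.sign (Equiv.ofBijective f h) else 0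

/-- Raise all indices of a covariant tensor with the inverse metric. -/
def raiseAll {n k : ℕ} (g : MetricField n) (T : TensorField n k) : TensorField n k :=
  fun x idx => ∑ jdx : Fin k → Fin n, (∏ m, (g x)⁻¹ (idx m) (jdx m)) * T x jdx

/-- Hodge dual of a `p`-form (`p + q = n`), via the metric volume element
`√|det g| ε_{a₁…aₙ}`. -/
def hodge {n p q : ℕ} (h : p + q = n) (g : MetricField n) (F : TensorField n p) :
    TensorField n q := fun x idx =>
  (1 / (Nat.factorial p : ℝ)) *
    ∑ a : Fin p → Fin n, raiseAll g F x a *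
      (Real.sqrt |(g x).det| *
        ((permSign fun i => Fin.append a idx (Fin.cast h.symm i) : ℤ) : ℝ))

/-- Source-free Maxwell equations `dF = 0 = d*F` for a `p`-form (`p + q = n`). -/
def MaxwellEqs {n p q : ℕ} (h : p + q = n) (g : MetricField n) (F : TensorField n p) : Prop :=
  (∀ x idx, extD F x idx = 0) ∧ (∀ x idx, extD (hodge h g F) x idx = 0)

/-! ### Wedge products -/

def wedgeP {n a b : ℕ} (F : TensorField n a) (G : TensorField n b) : TensorField n (a+b) :=
  fun x idx => ∑ σ : Equiv.Perm (Fin (a+b)), ((Equiv.Perm.sign σ : ℤ) : ℝ) *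
    (F x fun i => idx (σ (Fin.castAdd b i))) * (G x fun j => idx (σ (Fin.natAdd a j)))

def wedgePow {n p : ℕ} (F : TensorField n p) : (k : ℕ) → TensorField n (p * k)
  | 0 => fun _ _ => 1
  | k + 1 => wedgeP (wedgePow F k) F

def castT {n a b : ℕ} (h : a = b) (T : TensorField n a) : TensorField n b :=
  fun x idx => T x fun i => idx (Fin.cast h i)

/-! ### Degenerate Kundt metrics in adapted coordinates -/

/-- The Kundt metric `ds² = 2 du (dr + H du + W_α dx^α) + g_{αβ} dx^α dx^β` in
coordinates `(u, r, x^α) = (x⁰, x¹, x^{α≥2})`. -/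
def kundtMetric {n : ℕ} (H : Pt n → ℝ) (W : Pt n → Fin n → ℝ) (hT : MetricField n) :
    MetricField n := fun x => Matrix.of fun a b =>
  if (a : ℕ) = 0 ∧ (b : ℕ) = 0 then 2 * H x
  else if ((a : ℕ) = 0 ∧ (b : ℕ) = 1) ∨ ((a : ℕ) = 1 ∧ (b : ℕ) = 0) then 1
  else if (a : ℕ) = 0 then W x b
  else if (b : ℕ) = 0 then W x a
  else if (a : ℕ) = 1 ∨ (b : ℕ) = 1 then 0
  else hT x a b

/-- A transverse (Riemannian) metric `g_{αβ}(u,x)`, stored as an `n×n` matrix padded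
by the identity on the coordinates `u, r`. -/
def IsTransverseMetric {n : ℕ} (hT : MetricField n) : Prop :=
  (∀ (x : Pt n) (a b : Fin n), ((a : ℕ) < 2 ∨ (b : ℕ) < 2) → hT x a b = (if a = b then 1 else 0)) ∧
  (∀ x, (hT x).IsSymm) ∧ (∀ a b, ContDiff ℝ (⊤ : ℕ∞) fun x => hT x a b) ∧
  IndepOfR hT ∧ (∀ x, (hT x).PosDef)

/-- Data of a degenerate Kundt metric: `W_α = r W¹_α + W⁰_α`,
`H = r² H² + r H¹ + H⁰`, transverse metric `hT`. -/
structure DegKundtData (n : ℕ) where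
  H2 : Pt n → ℝ
  H1 : Pt n → ℝ
  H0 : Pt n → ℝ
  W1 : Pt n → Fin n → ℝ
  W0 : Pt n → Fin n → ℝ
  hT : MetricField n

def DegKundtData.Hfun {n : ℕ} [NeZero n] (D : DegKundtData n) : Pt n → ℝ :=
  fun z => (z 1)^2 * D.H2 z + z 1 * D.H1 z + D.H0 z

def DegKundtData.Wfun {n : ℕ} [NeZero n] (D : DegKundtData n) : Pt n → Fin n → ℝ :=
  fun z b => z 1 * D.W1 z b + D.W0 z b

/-- The degenerate Kundt metric built from the data. -/
def DegKundtData.metric {n : ℕ} [NeZero n] (D : DegKundtData n) : MetricField n :=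
  kundtMetric D.Hfun D.Wfun D.hT

/-- Regularity and shape conditions on the degenerate Kundt data: the metric functions
depend only on `(u, x^α)` and are smooth, `W`'s are transverse. -/
def DegKundtData.Regular {n : ℕ} (D : DegKundtData n) : Prop :=
  IsTransverseMetric D.hT ∧
  IndepOfR D.H2 ∧ IndepOfR D.H1 ∧ IndepOfR D.H0 ∧ IndepOfR D.W1 ∧ IndepOfR D.W0 ∧
  ContDiff ℝ (⊤ : ℕ∞) D.H2 ∧ ContDiff ℝ (⊤ : ℕ∞) D.H1 ∧ ContDiff ℝ (⊤ : ℕ∞) D.H0 ∧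
  (∀ a, ContDiff ℝ (⊤ : ℕ∞) fun x => D.W1 x a) ∧ (∀ a, ContDiff ℝ (⊤ : ℕ∞) fun x => D.W0 x a) ∧
  (∀ (x : Pt n) (a : Fin n), (a : ℕ) < 2 → D.W1 x a = 0) ∧ (∀ (x : Pt n) (a : Fin n), (a : ℕ) < 2 → D.W0 x a = 0)

/-- The `(q+1)`-form `du ∧ f` built from a transverse `q`-form `f`. -/
def duWedge {n q : ℕ} (f : TensorField n q) : TensorField n (q+1) := fun x idx =>
  ∑ m : Fin (q+1), (-1 : ℝ) ^ (m : ℕ) * (if (idx m : ℕ) = 0 then 1 else 0) *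
    f x (fun i => idx (m.succAbove i))

/-- `f_{[α₂…α_p , α₁]} = 0`: `f` is closed in the transverse geometry. -/
def TransClosed {n q : ℕ} (f : TensorField n q) : Prop :=
  ∀ (x : Pt n) (v : Fin (q+1) → Fin n), (∀ i, 2 ≤ (v i : ℕ)) →
    (∑ m : Fin (q+1), (-1 : ℝ) ^ (m : ℕ) *
      pd (fun y => f y fun i => v (m.succAbove i)) (v m) x) = 0

/-- `(√g̃ f^{β α₁…α_{p-2}})_{,β} = 0`: `f` is co-closed in the transverse geometry. -/
def TransCoclosed {n q : ℕ} [NeZero q] (hT : MetricField n) (f : TensorField n q) : Prop :=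
  ∀ (x : Pt n) (v : Fin q → Fin n),
    (∑ b : Fin n, pd (fun y =>
      Real.sqrt (hT y).det * raiseAll hT f y (Function.update v 0 b)) b x) = 0

/-! ### Transverse curvature -/

def christoffelT {n : ℕ} (h : MetricField n) (x : Pt n) (a b c : Fin n) : ℝ :=
  (1/2) * ∑ d, (h x)⁻¹ a d *
    (pdT (fun y => h y d c) b x + pdT (fun y => h y b d) c x - pdT (fun y => h y b c) d x)

def covDT {n k : ℕ} (h : MetricField n) (T : TensorField n k) : TensorField n (k+1) :=
  fun x idx =>
    pdT (fun y => T y fun m => idx m.succ) (idx 0) x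
    - ∑ m : Fin k, ∑ e : Fin n,
        christoffelT h x e (idx 0) (idx m.succ) * T x (Function.update (fun m' => idx m'.succ) m e)

def riemannT {n : ℕ} (h : MetricField n) : TensorField n 4 := fun x idx =>
  ∑ e, h x (idx 0) e *
    (pdT (fun y => christoffelT h y e (idx 3) (idx 1)) (idx 2) x
     - pdT (fun y => christoffelT h y e (idx 2) (idx 1)) (idx 3) x
     + ∑ f', (christoffelT h x e (idx 2) f' * christoffelT h x f' (idx 3) (idx 1)
            - christoffelT h x e (idx 3) f' * christoffelT h x f' (idx 2) (idx 1)))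

def ricciT {n : ℕ} (h : MetricField n) (x : Pt n) (b d : Fin n) : ℝ :=
  ∑ a, ∑ c, (h x)⁻¹ a c * riemannT h x ![a, b, c, d]

def ricciScalarT {n : ℕ} (h : MetricField n) (x : Pt n) : ℝ :=
  ∑ b, ∑ d, (h x)⁻¹ b d * ricciT h x b d

/-- A covector field as a rank-1 tensor field. -/
def oneForm {n : ℕ} (W : Pt n → Fin n → ℝ) : TensorField n 1 := fun x idx => W x (idx 0)

/-- Transverse covariant derivative `∇̃_b V_a` (`= V_{a||b}`). -/
def nablaT {n : ℕ} (h : MetricField n) (V : TensorField n 1) (x : Pt n) (b a : Fin n) : ℝ :=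
  covDT h V x ![b, a]

/-- Second transverse covariant derivative `∇̃_c ∇̃_b V_a`. -/
def nablaT2 {n : ℕ} (h : MetricField n) (V : TensorField n 1) (x : Pt n) (c b a : Fin n) : ℝ :=
  covDT h (covDT h V) x ![c, b, a]

/-- Transverse divergence `V^{α}{}_{||α}`. -/
def divT {n : ℕ} (h : MetricField n) (V : TensorField n 1) (x : Pt n) : ℝ :=
  ∑ b, ∑ c, (h x)⁻¹ b c * nablaT h V x b c

def gradT {n : ℕ} (f : Pt n → ℝ) : TensorField n 1 := fun x idx => pdT f (idx 0) x

/-- Transverse Laplacian. -/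
def laplaceT {n : ℕ} (h : MetricField n) (f : Pt n → ℝ) (x : Pt n) : ℝ :=
  ∑ a, ∑ b, (h x)⁻¹ a b * covDT h (gradT f) x ![a, b]

def lnSqrtDet {n : ℕ} (h : MetricField n) (y : Pt n) : ℝ :=
  Real.log (Real.sqrt (h y).det)

/-! ### Electromagnetic energy-momentum tensor -/

/-- Standard energy-momentum tensor of a `(q+1)`-form Maxwell field:
`T_{ab} = (1/q!) (F_{a c⃗} F_b{}^{c⃗} - (1/(2(q+1))) g_{ab} F_{c⃗}F^{c⃗})`. -/
def emTensor {n q : ℕ} (g : MetricField n) (F : TensorField n (q+1)) (x : Pt n)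
    (a b : Fin n) : ℝ :=
  (1 / (Nat.factorial q : ℝ)) *
    ((∑ v : Fin q → Fin n, F x (Fin.cons a v) *
        ∑ w : Fin q → Fin n, (∏ i, (g x)⁻¹ (v i) (w i)) * F x (Fin.cons b w))
     - (1 / (2 * ((q : ℝ) + 1))) * g x a b *
        ∑ v : Fin (q+1) → Fin n, F x v * raiseAll g F x v)

/-! ### Coordinate transformations (for adapted coordinates) -/

/-- Jacobian `∂ψ^a/∂y^b` of a coordinate change. -/
def jac {n : ℕ} (ψ : Pt n → Pt n) (y : Pt n) (a b : Fin n) : ℝ :=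
  pd (fun z => ψ z a) b y

/-- Pullback of the metric along the coordinate change `ψ` (from new to old coords). -/
def pullMetric {n : ℕ} (g : MetricField n) (ψ : Pt n → Pt n) : MetricField n :=
  fun y => Matrix.of fun μ ν => ∑ a, ∑ b, jac ψ y a μ * jac ψ y b ν * g (ψ y) a b

/-- Pullback of a covariant tensor field along `ψ`. -/
def pullForm {n p : ℕ} (F : TensorField n p) (ψ : Pt n → Pt n) : TensorField n p :=
  fun y idx => ∑ jdx : Fin p → Fin n, (∏ m, jac ψ y (jdx m) (idx m)) * F (ψ y) jdx

/-! ### Parallelly transported adapted frames -/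

/-- A null frame field containing `ℓ`, parallelly transported along `ℓ` and adapted
(`M^i_{jk} = 0`). -/
structure AdaptedPTFrame {n : ℕ} [NeZero n] (g : MetricField n) (ℓ : VecField n) where
  fr : ∀ x : Pt n, NullFrameAt g x
  aligned : ∀ x, (fr x).e 0 = ℓ x
  parallel : ∀ (x : Pt n) (a c : Fin n),
    (∑ b, ℓ x b * (pd (fun y => (fr y).e a c) b x
      + ∑ d, christoffel g x c b d * (fr x).e a d)) = 0
  adapted : ∀ (x : Pt n) (i j k : Fin n), 2 ≤ (i : ℕ) → 2 ≤ (j : ℕ) → 2 ≤ (k : ℕ) →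
    (∑ a, ∑ b, covD g (lowerField g fun z => (fr z).e j) x ![b, a]
      * (fr x).e i a * (fr x).e k b) = 0

/-! ### Explicit Petrov type III solutions -/

/-- The type III vacuum metric of Petrov,
`ds² = 2 du (dr + ½(xr − x eˣ) du) + eˣ(dx² + e^{2u} dy²)`, in coordinates
`(u,r,x,y)`. -/
def petrovG : MetricField 4 := fun z => Matrix.of fun a b =>
  if a = 0 ∧ b = 0 then z 2 * z 1 - z 2 * Real.exp (z 2)
  else if (a = 0 ∧ b = 1) ∨ (a = 1 ∧ b = 0) then 1
  else if a = 2 ∧ b = 2 then Real.exp (z 2)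
  else if a = 3 ∧ b = 3 then Real.exp (z 2 + 2 * z 0)
  else 0

/-- The same metric with the electromagnetic backreaction term
`−2κ₀ eˣ c(u)²` included in `2H`. -/
def petrovEM (κ₀ : ℝ) (c : ℝ → ℝ) : MetricField 4 := fun z => Matrix.of fun a b =>
  if a = 0 ∧ b = 0 then z 2 * z 1 - z 2 * Real.exp (z 2) - 2 * κ₀ * Real.exp (z 2) * (c (z 0))^2
  else if (a = 0 ∧ b = 1) ∨ (a = 1 ∧ b = 0) then 1
  else if a = 2 ∧ b = 2 then Real.exp (z 2)
  else if a = 3 ∧ b = 3 then Real.exp (z 2 + 2 * z 0)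
  else 0

/-- The null direction `ℓ = ∂_r`. -/
def ellR : VecField 4 := fun _ a => if a = 1 then 1 else 0

/-- The transverse covector of the VSI Maxwell field (4). -/
def petrovA (c : ℝ → ℝ) (z : Pt 4) : Fin 4 → ℝ := fun a =>
  if a = 2 then -(Real.exp (z 2 / 2) * c (z 0) * Real.cos (z 3 * Real.exp (z 0) / 2))
  else if a = 3 then Real.exp (z 2 / 2) * c (z 0) * Real.exp (z 0) * Real.sin (z 3 * Real.exp (z 0) / 2)
  else 0

/-- The Maxwell 2-form
`F = e^{x/2} c(u) du ∧ (−cos(y eᵘ/2) dx + eᵘ sin(y eᵘ/2) dy)`. -/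
def petrovF (c : ℝ → ℝ) : TensorField 4 2 := fun z idx =>
  (if idx 0 = 0 then petrovA c z (idx 1) else 0)
  - (if idx 1 = 0 then petrovA c z (idx 0) else 0)



/-! ### The filtration by degree in `r` -/

lemma pd_of_indep {a : Pt 4 → ℝ} (ha : IndepOfR a) (x : Pt 4) : pd a 1 x = 0 := by
  unfold pd
  by_cases hd : DifferentiableAt ℝ a x
  · have h1 : HasDerivAt (fun t : ℝ => a (x + t • Pi.single (1 : Fin 4) (1 : ℝ)))
        (fderiv ℝ a x (Pi.single 1 1)) 0 := by
      have := hd.hasFDerivAt.hasLineDerivAt (Pi.single (1 : Fin 4) (1 : ℝ))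
      exact this
    have h2 : (fun t : ℝ => a (x + t • Pi.single (1 : Fin 4) (1 : ℝ))) = fun _ => a x := by
      funext t
      apply ha
      intro i hi
      have : i ≠ 1 := by
        rintro rfl
        exact hi rfl
      simp [this]
    rw [h2] at h1
    exact h1.unique (hasDerivAt_const _ _)
  · rw [fderiv_zero_of_not_differentiableAt hd]; rfl

lemma pd_indep {a : Pt 4 → ℝ} (ha : IndepOfR a) (b : Fin 4) :
    IndepOfR (fun x => pd a b x) := by
  intro x x' h
  change fderiv ℝ a x (Pi.single b 1) = fderiv ℝ a x' (Pi.single b 1)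
  have hx : x' = x + (x' - x) := by simp
  have h2 : (fun y : Pt 4 => a (y + (x' - x))) = a := by
    funext y
    apply ha
    intro i hi
    simp [h i hi]
  conv_lhs => rw [← h2]
  rw [fderiv_comp_add_right, ← hx]

lemma pd_smooth {a : Pt 4 → ℝ} (hs : ContDiff ℝ (⊤ : ℕ∞) a) (b : Fin 4) :
    ContDiff ℝ (⊤ : ℕ∞) (fun x => pd a b x) := by
  unfold pd
  have h := hs.fderiv_right (m := ((⊤ : ℕ∞) : WithTop ℕ∞)) (by simp)
  exact h.clm_apply contDiff_const

/-- Functions polynomial in `r` of degree `≤ d` with smooth `r`-independent coefficients. -/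
def DR (d : ℤ) : Submodule ℝ (Pt 4 → ℝ) :=
  Submodule.span ℝ {f | ∃ (a : Pt 4 → ℝ) (i : ℕ), ContDiff ℝ (⊤ : ℕ∞) a ∧ IndepOfR a ∧
    (i : ℤ) ≤ d ∧ f = fun x => a x * x 1 ^ i}

lemma DR_neg {d : ℤ} (hd : d < 0) {f : Pt 4 → ℝ} (hf : f ∈ DR d) : f = 0 := by
  have : DR d = ⊥ := by
    unfold DR
    rw [Submodule.span_eq_bot]
    rintro f ⟨a, i, -, -, h, -⟩
    omega
  rw [this] at hf
  simpa using hf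

lemma DR_mono {d e : ℤ} (h : d ≤ e) {f : Pt 4 → ℝ} (hf : f ∈ DR d) : f ∈ DR e := by
  refine Submodule.span_mono ?_ hf
  rintro f ⟨a, i, h1, h2, h3, h4⟩
  exact ⟨a, i, h1, h2, h3.trans h, h4⟩

lemma DR_smooth {d : ℤ} {f : Pt 4 → ℝ} (hf : f ∈ DR d) : ContDiff ℝ (⊤ : ℕ∞) f := by
  unfold DR at hf
  induction hf using Submodule.span_induction with
  | mem f h =>
    obtain ⟨a, i, h1, h2, h3, rfl⟩ := h
    fun_prop
  | zero => exact contDiff_const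
  | add f g _ _ hf hg => exact hf.add hg
  | smul c f _ hf => exact contDiff_const.smul hf

lemma DR_gen {d : ℤ} {a : Pt 4 → ℝ} (i : ℕ) (h1 : ContDiff ℝ (⊤ : ℕ∞) a) (h2 : IndepOfR a)
    (h3 : (i : ℤ) ≤ d) : (fun x => a x * x 1 ^ i) ∈ DR d :=
  Submodule.subset_span ⟨a, i, h1, h2, h3, rfl⟩

lemma DR_zeroDeg {d : ℤ} {a : Pt 4 → ℝ} (h1 : ContDiff ℝ (⊤ : ℕ∞) a) (h2 : IndepOfR a)
    (h3 : 0 ≤ d) : a ∈ DR d := by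
  simpa using DR_gen 0 h1 h2 h3

lemma DR_mul {d e : ℤ} {f g : Pt 4 → ℝ} (hf : f ∈ DR d) (hg : g ∈ DR e) :
    (fun x => f x * g x) ∈ DR (d + e) := by
  change f * g ∈ DR (d + e)
  have : f * g ∈ DR d * DR e := Submodule.mul_mem_mul hf hg
  unfold DR at this
  rw [Submodule.span_mul_span] at this
  refine Submodule.span_mono ?_ this
  rintro _ ⟨_, ⟨a, i, h1, h2, h3, rfl⟩, _, ⟨b, j, k1, k2, k3, rfl⟩, rfl⟩
  refine ⟨fun x => a x * b x, i + j, h1.mul k1, ?_, by push_cast; omega, ?_⟩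
  · intro x x' h
    simp only [h2 x x' h, k2 x x' h]
  · funext x
    simp only [Pi.mul_apply]
    ring

lemma DR_prod {ι : Type*} (s : Finset ι) (d : ι → ℤ) (f : ι → Pt 4 → ℝ)
    (h : ∀ i ∈ s, f i ∈ DR (d i)) : (fun x => ∏ i ∈ s, f i x) ∈ DR (∑ i ∈ s, d i) := by
  classical
  induction s using Finset.induction_on with
  | empty =>
    simp only [Finset.prod_empty, Finset.sum_empty]
    exact DR_zeroDeg contDiff_const (fun _ _ _ => rfl) le_rfl
  | insert i s hi ih =>
    simp only [Finset.prod_insert hi, Finset.sum_insert hi]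
    exact DR_mul (h i (by simp)) (ih fun j hj => h j (by simp [hj]))

lemma DR_sum {ι : Type*} (s : Finset ι) {d : ℤ} (f : ι → Pt 4 → ℝ)
    (h : ∀ i ∈ s, f i ∈ DR d) : (fun x => ∑ i ∈ s, f i x) ∈ DR d := by
  have : (fun x => ∑ i ∈ s, f i x) = ∑ i ∈ s, f i := by
    funext x; simp
  rw [this]
  exact Submodule.sum_mem _ h

/-- Weight of an index: `r` has weight `1`, `u` has weight `-1`. -/
def wt (a : Fin 4) : ℤ := if a = 0 then -1 else if a = 1 then 1 else 0

lemma pd_add' {f g : Pt 4 → ℝ} (hf : Differentiable ℝ f) (hg : Differentiable ℝ g) (b : Fin 4)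
    (x : Pt 4) : pd (fun y => f y + g y) b x = pd f b x + pd g b x := by
  unfold pd
  rw [fderiv_fun_add (hf x) (hg x)]; rfl

lemma pd_sub' {f g : Pt 4 → ℝ} (hf : Differentiable ℝ f) (hg : Differentiable ℝ g) (b : Fin 4)
    (x : Pt 4) : pd (fun y => f y - g y) b x = pd f b x - pd g b x := by
  unfold pd
  rw [fderiv_fun_sub (hf x) (hg x)]; rfl

lemma pd_neg' {f : Pt 4 → ℝ} (b : Fin 4)
    (x : Pt 4) : pd (fun y => - f y) b x = - pd f b x := by
  unfold pd
  rw [fderiv_fun_neg]; rfl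

lemma pd_mul' {f g : Pt 4 → ℝ} (hf : Differentiable ℝ f) (hg : Differentiable ℝ g) (b : Fin 4)
    (x : Pt 4) : pd (fun y => f y * g y) b x = f x * pd g b x + g x * pd f b x := by
  unfold pd
  rw [fderiv_fun_mul (hf x) (hg x)]; rfl

lemma pd_const' (c : ℝ) (b : Fin 4) (x : Pt 4) : pd (fun _ => c) b x = 0 := by
  unfold pd
  simp

lemma pd_coord (i b : Fin 4) (x : Pt 4) : pd (fun y => y i) b x = if i = b then 1 else 0 := by
  unfold pd
  have : (fun y : Pt 4 => y i) = ContinuousLinearMap.proj (R := ℝ) i := rfl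
  rw [this, ContinuousLinearMap.fderiv]
  simp [Pi.single_apply]

lemma pd_comp' {φ : ℝ → ℝ} {f : Pt 4 → ℝ} (hφ : Differentiable ℝ φ) (hf : Differentiable ℝ f)
    (b : Fin 4) (x : Pt 4) : pd (fun y => φ (f y)) b x = deriv φ (f x) * pd f b x := by
  unfold pd
  have h := (hφ (f x)).hasDerivAt.comp_hasFDerivAt x (hf x).hasFDerivAt
  have h2 := h.fderiv
  have h3 : (φ ∘ f) = fun y => φ (f y) := rfl
  rw [h3] at h2
  rw [h2]; rfl

lemma pd_exp' {f : Pt 4 → ℝ} (hf : Differentiable ℝ f) (b : Fin 4) (x : Pt 4) :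
    pd (fun y => Real.exp (f y)) b x = Real.exp (f x) * pd f b x := by
  rw [pd_comp' Real.differentiable_exp hf]; simp

lemma pd_sin' {f : Pt 4 → ℝ} (hf : Differentiable ℝ f) (b : Fin 4) (x : Pt 4) :
    pd (fun y => Real.sin (f y)) b x = Real.cos (f x) * pd f b x := by
  rw [pd_comp' Real.differentiable_sin hf]; simp

lemma pd_cos' {f : Pt 4 → ℝ} (hf : Differentiable ℝ f) (b : Fin 4) (x : Pt 4) :
    pd (fun y => Real.cos (f y)) b x = - Real.sin (f x) * pd f b x := by
  rw [pd_comp' Real.differentiable_cos hf]; simp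

lemma pd_div_const {f : Pt 4 → ℝ} (hf : Differentiable ℝ f) (c : ℝ) (b : Fin 4) (x : Pt 4) :
    pd (fun y => f y / c) b x = pd f b x / c := by
  simp only [div_eq_mul_inv]
  rw [pd_mul' hf (by fun_prop), pd_const']; ring

lemma DR_pd {d : ℤ} {f : Pt 4 → ℝ} (hf : f ∈ DR d) (b : Fin 4) :
    (fun x => pd f b x) ∈ DR (d - wt b) := by
  have hf0 := hf
  unfold DR at hf
  induction hf using Submodule.span_induction with
  | mem f h =>
    obtain ⟨a, i, h1, h2, h3, rfl⟩ := h
    have e1 : (fun x => pd (fun x : Pt 4 => a x * x 1 ^ i) b x) =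
        fun x => a x * ((i : ℝ) * x 1 ^ (i - 1) * if (1 : Fin 4) = b then 1 else 0)
          + pd a b x * x 1 ^ i := by
      funext x
      rw [pd_mul' (h1.differentiable (by simp)) (by fun_prop),
        pd_comp' (φ := fun t => t ^ i) (by fun_prop) (by fun_prop), pd_coord]
      simp
      ring
    rw [e1]
    by_cases hb : b = 1
    · subst hb
      have e2 : (fun x : Pt 4 => a x * ((i : ℝ) * x 1 ^ (i - 1) *
          if (1 : Fin 4) = 1 then 1 else 0) + pd a 1 x * x 1 ^ i) =
          fun x => ((i : ℝ) * a x) * x 1 ^ (i - 1) := by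
        funext x
        rw [pd_of_indep h2]
        simp
        ring
      rw [e2]
      rcases Nat.eq_zero_or_pos i with rfl | hi
      · simp
        exact Submodule.zero_mem _
      · refine DR_gen (a := fun x => (i : ℝ) * a x) (i - 1) (contDiff_const.mul h1) ?_ ?_
        · intro x x' h
          simp only [h2 x x' h]
        · simp [wt]
          omega
    · have hb' : ¬ (1 : Fin 4) = b := fun h => hb h.symm
      simp only [hb', if_false, mul_zero, zero_add]
      refine DR_gen (a := fun x => pd a b x) i (pd_smooth h1 b) (pd_indep h2 b) ?_
      simp only [wt, hb, if_false]
      split_ifs <;> omega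
  | zero =>
    have : (fun x => pd (0 : Pt 4 → ℝ) b x) = 0 := by
      funext x
      exact pd_const' 0 b x
    rw [this]
    exact Submodule.zero_mem _
  | add f g hf hg ihf ihg =>
    have e : (fun x => pd (f + g) b x) = (fun x => pd f b x) + fun x => pd g b x := by
      funext x
      exact pd_add' ((DR_smooth hf).differentiable (by simp))
        ((DR_smooth hg).differentiable (by simp)) b x
    rw [e]
    exact Submodule.add_mem _ (ihf hf) (ihg hg)
  | smul c f hf ihf =>
    have e : (fun x => pd (c • f) b x) = c • (fun x => pd f b x) := by
      funext x
      have := pd_mul' (f := fun _ => c) (by fun_prop)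
        ((DR_smooth hf).differentiable (by simp)) b x
      rw [pd_const', mul_zero, add_zero] at this
      exact this
    rw [e]
    exact Submodule.smul_mem _ _ (ihf hf)

/-- A tensor field lies in the filtration step `s`. -/
def Filt {k : ℕ} (s : ℤ) (T : TensorField 4 k) : Prop :=
  ∀ idx : Fin k → Fin 4, (fun x => T x idx) ∈ DR (-s - ∑ m, wt (idx m))

/-! ### The Petrov metric -/

/-- Explicit inverse metric. -/
def petrovInv : MetricField 4 := fun z => Matrix.of fun a b =>
  if a = 1 ∧ b = 1 then -(z 2 * z 1 - z 2 * Real.exp (z 2))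
  else if (a = 0 ∧ b = 1) ∨ (a = 1 ∧ b = 0) then 1
  else if a = 2 ∧ b = 2 then Real.exp (-z 2)
  else if a = 3 ∧ b = 3 then Real.exp (-(z 2 + 2 * z 0))
  else 0

lemma petrov_inv (z : Pt 4) : (petrovG z)⁻¹ = petrovInv z := by
  apply Matrix.inv_eq_right_inv
  ext a b
  fin_cases a <;> fin_cases b <;>
    simp [Matrix.mul_apply, Fin.sum_univ_four, petrovG, petrovInv, ← Real.exp_add]

lemma indep_of {f : ℝ → ℝ → ℝ → ℝ} : IndepOfR (fun z : Pt 4 => f (z 0) (z 2) (z 3)) := by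
  intro x x' h
  simp only [h 0 (by decide), h 2 (by decide), h 3 (by decide)]

lemma petrov_uu : (fun z : Pt 4 => z 2 * z 1 - z 2 * Real.exp (z 2)) ∈ DR 1 := by
  have h1 : (fun z : Pt 4 => z 2 * z 1 ^ 1) ∈ DR 1 :=
    DR_gen (a := fun z => z 2) 1 (by fun_prop) (indep_of (f := fun _ x _ => x)) (by simp)
  have h2 : (fun z : Pt 4 => z 2 * Real.exp (z 2)) ∈ DR 1 :=
    DR_zeroDeg (by fun_prop) (indep_of (f := fun _ x _ => x * Real.exp x)) (by simp)
  simp only [pow_one] at h1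
  exact Submodule.sub_mem _ h1 h2

lemma petrovG_mem (a b : Fin 4) : (fun z => petrovG z a b) ∈ DR (- wt a - wt b) := by
  have z0 : ∀ d, (fun _ : Pt 4 => (0 : ℝ)) ∈ DR d := fun d => Submodule.zero_mem _
  have o1 : (fun _ : Pt 4 => (1 : ℝ)) ∈ DR 0 := DR_zeroDeg contDiff_const (fun _ _ _ => rfl) le_rfl
  have x1 : (fun z : Pt 4 => Real.exp (z 2)) ∈ DR 0 :=
    DR_zeroDeg (by fun_prop) (indep_of (f := fun _ x _ => Real.exp x)) le_rfl
  have y1 : (fun z : Pt 4 => Real.exp (z 2 + 2 * z 0)) ∈ DR 0 :=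
    DR_zeroDeg (by fun_prop) (indep_of (f := fun u x _ => Real.exp (x + 2 * u))) le_rfl
  have u1 := DR_mono (e := 2) (by norm_num) petrov_uu
  fin_cases a <;> fin_cases b <;> simp [petrovG, wt, z0, o1, x1, y1] <;> exact u1

lemma petrovInv_mem (a b : Fin 4) : (fun z => petrovInv z a b) ∈ DR (wt a + wt b) := by
  have z0 : ∀ d, (fun _ : Pt 4 => (0 : ℝ)) ∈ DR d := fun d => Submodule.zero_mem _
  have o1 : (fun _ : Pt 4 => (1 : ℝ)) ∈ DR 0 := DR_zeroDeg contDiff_const (fun _ _ _ => rfl) le_rfl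
  have x1 : (fun z : Pt 4 => Real.exp (-z 2)) ∈ DR 0 :=
    DR_zeroDeg (by fun_prop) (indep_of (f := fun _ x _ => Real.exp (-x))) le_rfl
  have y1 : (fun z : Pt 4 => Real.exp (-(z 2 + 2 * z 0))) ∈ DR 0 :=
    DR_zeroDeg (by fun_prop) (indep_of (f := fun u x _ => Real.exp (-(x + 2 * u)))) le_rfl
  have u1 : (fun z : Pt 4 => -(z 2 * z 1 - z 2 * Real.exp (z 2))) ∈ DR 2 :=
    Submodule.neg_mem _ (DR_mono (e := 2) (by norm_num) petrov_uu)
  fin_cases a <;> fin_cases b <;> simp only [petrovInv, wt] <;> simp [z0, o1, x1] <;>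
    first | (simpa using u1) | (simpa using y1)

lemma christoffel_mem (a b c : Fin 4) :
    (fun x => christoffel petrovG x a b c) ∈ DR (wt a - wt b - wt c) := by
  unfold christoffel
  simp only [petrov_inv]
  refine Submodule.smul_mem _ (1/2 : ℝ) (DR_sum _ (fun d x => petrovInv x a d *
    (pd (fun y => petrovG y d c) b x + pd (fun y => petrovG y b d) c x
      - pd (fun y => petrovG y b c) d x)) ?_)
  intro d _
  have h := DR_mul (petrovInv_mem a d) (e := - wt b - wt c - wt d)
    (g := fun x => pd (fun y => petrovG y d c) b x + pd (fun y => petrovG y b d) c x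
      - pd (fun y => petrovG y b c) d x) ?_
  · refine DR_mono ?_ h
    omega
  · refine Submodule.sub_mem _ (Submodule.add_mem _ ?_ ?_) ?_
    · exact DR_mono (by omega) (DR_pd (petrovG_mem d c) b)
    · exact DR_mono (by omega) (DR_pd (petrovG_mem b d) c)
    · exact DR_mono (by omega) (DR_pd (petrovG_mem b c) d)

lemma Filt_covD {k : ℕ} {s : ℤ} {T : TensorField 4 k} (hT : Filt s T) :
    Filt s (covD petrovG T) := by
  intro idx
  unfold covD
  refine Submodule.sub_mem _ ?_ ?_
  · refine DR_mono ?_ (DR_pd (hT fun m => idx m.succ) (idx 0))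
    rw [Fin.sum_univ_succ]
    omega
  · refine DR_sum _ _ fun m _ => DR_sum _ _ fun e _ => ?_
    refine DR_mono ?_ (DR_mul (christoffel_mem e (idx 0) (idx m.succ)) (hT _))
    rw [Fin.sum_univ_succ]
    have h1 : ∑ i, wt (Function.update (fun m' : Fin k => idx m'.succ) m e i) =
        wt e + ∑ i ∈ Finset.univ \ {m}, wt (idx i.succ) := by
      have := Finset.sum_update_of_mem (Finset.mem_univ m) (fun i : Fin k => wt (idx i.succ)) (wt e)
      rw [← this]
      refine Finset.sum_congr rfl fun i _ => ?_
      by_cases h : i = m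
      · subst h; simp
      · simp [h]
    have h2 : ∑ i : Fin k, wt (idx i.succ) =
        wt (idx m.succ) + ∑ i ∈ Finset.univ \ {m}, wt (idx i.succ) := by
      have := Finset.sum_update_of_mem (Finset.mem_univ m) (fun i : Fin k => wt (idx i.succ))
        (wt (idx m.succ))
      rw [← this]
      refine Finset.sum_congr rfl fun i _ => ?_
      by_cases h : i = m
      · subst h; simp
      · simp [h]
    omega

lemma Filt_covDIter {k : ℕ} {s : ℤ} {T : TensorField 4 k} (hT : Filt s T) (I : ℕ) :
    Filt s (covDIter petrovG T I) := by
  induction I with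
  | zero => exact hT
  | succ I ih => exact Filt_covD ih

lemma Filt_covDIter' {k : ℕ} {s : ℤ} {T : TensorField 4 k} (hT : Filt s (covD petrovG T)) (I : ℕ) :
    Filt s (covDIter petrovG T (I + 1)) := by
  induction I with
  | zero => exact hT
  | succ I ih => exact Filt_covD ih

lemma Filt_value {k r : ℕ} (S : ConcomScheme k r) {T : TensorField 4 k} (s : Fin S.N → ℤ)
    (h : ∀ j, Filt (s j) (covDIter petrovG T (S.ord j))) :
    Filt (∑ j, s j) (S.value petrovG T) := by
  intro free
  unfold ConcomScheme.value
  refine DR_sum _ _ fun φ _ => ?_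
  simp only [petrov_inv]
  refine DR_mono ?_ (DR_mul
    (DR_prod _ (fun i => wt (φ (i, false)) + wt (φ (i, true))) _ fun i _ => petrovInv_mem _ _)
    (DR_prod _ _ _ fun j _ => h j _))
  have e1 : ∑ j : Fin S.N, ∑ t : Fin (k + S.ord j), wt (Sum.elim φ free (S.slots.symm ⟨j, t⟩)) =
      ∑ p, wt (Sum.elim φ free p) := by
    rw [← Equiv.sum_comp S.slots.symm, Fintype.sum_sigma]
  rw [Finset.sum_sub_distrib, e1, Fintype.sum_sum_type, Fintype.sum_prod_type,
    Finset.sum_neg_distrib]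
  simp only [Sum.elim_inl, Sum.elim_inr, Fintype.sum_bool]
  simp only [Finset.sum_add_distrib]
  omega

/-! ### Explicit computations -/

/-- Partial derivatives of the metric components. -/
def dG (d a b : Fin 4) (x : Pt 4) : ℝ :=
  if a = 0 ∧ b = 0 then
    (if d = 1 then x 2 else if d = 2 then x 1 - (1 + x 2) * Real.exp (x 2) else 0)
  else if a = 2 ∧ b = 2 then (if d = 2 then Real.exp (x 2) else 0)
  else if a = 3 ∧ b = 3 then
    (if d = 2 then Real.exp (x 2 + 2 * x 0) else if d = 0 then 2 * Real.exp (x 2 + 2 * x 0) else 0)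
  else 0

lemma pd_petrovG (d a b : Fin 4) (x : Pt 4) : pd (fun y => petrovG y a b) d x = dG d a b x := by
  have h1 : ∀ d, pd (fun z : Pt 4 => z 2 * z 1 - z 2 * Real.exp (z 2)) d x = dG d 0 0 x := by
    intro d
    rw [pd_sub' (by fun_prop) (by fun_prop), pd_mul' (by fun_prop) (by fun_prop),
      pd_mul' (by fun_prop) (by fun_prop), pd_exp' (by fun_prop), pd_coord, pd_coord]
    fin_cases d <;> simp [dG]
    ring
  have h2 : ∀ d, pd (fun z : Pt 4 => Real.exp (z 2)) d x = dG d 2 2 x := by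
    intro d
    rw [pd_exp' (by fun_prop), pd_coord]
    fin_cases d <;> simp [dG]
  have h3 : ∀ d, pd (fun z : Pt 4 => Real.exp (z 2 + 2 * z 0)) d x = dG d 3 3 x := by
    intro d
    rw [pd_exp' (by fun_prop), pd_add' (by fun_prop) (by fun_prop),
      pd_mul' (by fun_prop) (by fun_prop), pd_coord, pd_coord, pd_const']
    fin_cases d <;> simp [dG]
    ring
  fin_cases a <;> fin_cases b <;>
    first
    | exact h1 d
    | exact h2 d
    | exact h3 d
    | (simp [petrovG, dG, pd_const'])

lemma christoffel_eq (x : Pt 4) (a b c : Fin 4) : christoffel petrovG x a b c =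
    (1/2) * ∑ d, petrovInv x a d * (dG b d c x + dG c b d x - dG d b c x) := by
  simp only [christoffel, petrov_inv, pd_petrovG]

lemma chr0 (x : Pt 4) (b c : Fin 4) : christoffel petrovG x 0 b c =
    if b = 0 ∧ c = 0 then - (x 2 / 2) else 0 := by
  rw [christoffel_eq]
  fin_cases b <;> fin_cases c <;> simp [Fin.sum_univ_four, petrovInv, dG]
  ring

lemma chr2 (x : Pt 4) (b c : Fin 4) (hc : c ≠ 0) : christoffel petrovG x 2 b c =
    if b = 2 ∧ c = 2 then 1/2 else if b = 3 ∧ c = 3 then - (Real.exp (2 * x 0) / 2) else 0 := by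
  have e1 : Real.exp (-x 2) * Real.exp (x 2) = 1 := by rw [← Real.exp_add]; simp
  have e2 : Real.exp (-x 2) * Real.exp (x 2 + 2 * x 0) = Real.exp (2 * x 0) := by
    rw [← Real.exp_add]; congr 1; ring
  rw [christoffel_eq]
  fin_cases b <;> fin_cases c <;> simp [Fin.sum_univ_four, petrovInv, dG] at hc ⊢
  · linear_combination e1
  · linear_combination (1/2) * e2

lemma chr3 (x : Pt 4) (b c : Fin 4) (hc : c ≠ 0) : christoffel petrovG x 3 b c =
    if (b = 2 ∧ c = 3) ∨ (b = 3 ∧ c = 2) then 1/2 else if b = 0 ∧ c = 3 then 1 else 0 := by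
  have e2 : Real.exp (-(x 2 + 2 * x 0)) * Real.exp (x 2 + 2 * x 0) = 1 := by
    rw [← Real.exp_add]; simp
  rw [christoffel_eq]
  fin_cases b <;> fin_cases c <;>
    simp [Fin.sum_univ_four, petrovInv, dG, -neg_add_rev] at hc ⊢ <;>
    first
    | linear_combination e2
    | linear_combination (1/2) * e2

/-- `du ∧ B`. -/
def duW (B : Pt 4 → Fin 4 → ℝ) : TensorField 4 2 := fun z idx =>
  (if idx 0 = 0 then B z (idx 1) else 0) - (if idx 1 = 0 then B z (idx 0) else 0)

lemma petrovF_eq (c : ℝ → ℝ) : petrovF c = duW (petrovA c) := rfl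

lemma extD_duW (B : Pt 4 → Fin 4 → ℝ) (h : ∀ x a b, a ≠ 0 → b ≠ 0 →
    pd (fun y => B y b) a x = pd (fun y => B y a) b x) (x : Pt 4) (idx : Fin 3 → Fin 4) :
    extD (duW B) x idx = 0 := by
  have s1 : (0 : Fin 3).succAbove (0 : Fin 2) = 1 := rfl
  have s2 : (0 : Fin 3).succAbove (1 : Fin 2) = 2 := rfl
  have s3 : (1 : Fin 3).succAbove (0 : Fin 2) = 0 := rfl
  have s4 : (1 : Fin 3).succAbove (1 : Fin 2) = 2 := rfl
  have s5 : (2 : Fin 3).succAbove (0 : Fin 2) = 0 := rfl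
  have s6 : (2 : Fin 3).succAbove (1 : Fin 2) = 1 := rfl
  unfold extD
  refine (Fin.sum_univ_three _).trans ?_
  simp only [duW, s1, s2, s3, s4, s5, s6]
  generalize idx 0 = i
  generalize idx 1 = j
  generalize idx 2 = k
  have h' := fun a b => h x a b
  by_cases hi : i = 0 <;> by_cases hj : j = 0 <;> by_cases hk : k = 0 <;>
    simp [hi, hj, hk, pd_const', pd_neg']
  · rw [h' j k hj hk]; ring
  · rw [h' i k hi hk]; ring
  · rw [h' i j hi hj]; ring

lemma petrovA_smooth {c : ℝ → ℝ} (hc : ContDiff ℝ (⊤ : ℕ∞) c) (a : Fin 4) :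
    ContDiff ℝ (⊤ : ℕ∞) fun z => petrovA c z a := by
  unfold petrovA
  split_ifs <;> fun_prop

lemma petrovA_indep (c : ℝ → ℝ) (a : Fin 4) : IndepOfR fun z => petrovA c z a := by
  intro x x' h
  simp only [petrovA, h 0 (by decide), h 2 (by decide), h 3 (by decide)]

lemma pd1_petrovA (c : ℝ → ℝ) (a : Fin 4) (x : Pt 4) : pd (fun z => petrovA c z a) 1 x = 0 :=
  pd_of_indep (petrovA_indep c a) x

lemma petrovA_0 (c : ℝ → ℝ) (z : Pt 4) : petrovA c z 0 = 0 := rfl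
lemma petrovA_1 (c : ℝ → ℝ) (z : Pt 4) : petrovA c z 1 = 0 := rfl
lemma petrovA_2 (c : ℝ → ℝ) (z : Pt 4) : petrovA c z 2 =
  -(Real.exp (z 2 / 2) * c (z 0) * Real.cos (z 3 * Real.exp (z 0) / 2)) := rfl
lemma petrovA_3 (c : ℝ → ℝ) (z : Pt 4) : petrovA c z 3 =
  Real.exp (z 2 / 2) * c (z 0) * Real.exp (z 0) * Real.sin (z 3 * Real.exp (z 0) / 2) := rfl

lemma dA22 {c : ℝ → ℝ} (hc : Differentiable ℝ c) (x : Pt 4) :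
    pd (fun z => petrovA c z 2) 2 x = petrovA c x 2 / 2 := by
  simp (disch := fun_prop) only [petrovA_2, pd_neg', pd_mul', pd_exp', pd_cos', pd_div_const,
    pd_coord, pd_comp' hc]
  simp
  ring

lemma dA23 {c : ℝ → ℝ} (hc : Differentiable ℝ c) (x : Pt 4) :
    pd (fun z => petrovA c z 3) 2 x = petrovA c x 3 / 2 := by
  simp (disch := fun_prop) only [petrovA_3, pd_neg', pd_mul', pd_exp', pd_sin', pd_div_const,
    pd_coord, pd_comp' hc]
  simp
  ring

lemma dA32 {c : ℝ → ℝ} (hc : Differentiable ℝ c) (x : Pt 4) :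
    pd (fun z => petrovA c z 2) 3 x = petrovA c x 3 / 2 := by
  simp (disch := fun_prop) only [petrovA_2, petrovA_3, pd_neg', pd_mul', pd_exp', pd_cos',
    pd_div_const, pd_coord, pd_comp' hc]
  simp
  ring

lemma dA33 {c : ℝ → ℝ} (hc : Differentiable ℝ c) (x : Pt 4) :
    pd (fun z => petrovA c z 3) 3 x = - (Real.exp (2 * x 0) * petrovA c x 2) / 2 := by
  simp (disch := fun_prop) only [petrovA_2, petrovA_3, pd_neg', pd_mul', pd_exp', pd_sin',
    pd_div_const, pd_coord, pd_comp' hc]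
  have : Real.exp (2 * x 0) = Real.exp (x 0) * Real.exp (x 0) := by
    rw [← Real.exp_add]; congr 1; ring
  simp [this]
  ring

lemma extD_petrovF {c : ℝ → ℝ} (hc : Differentiable ℝ c) (x : Pt 4) (idx : Fin 3 → Fin 4) :
    extD (petrovF c) x idx = 0 := by
  rw [petrovF_eq]
  apply extD_duW
  intro x a b ha hb
  fin_cases a <;> fin_cases b <;> simp at ha hb ⊢ <;>
    simp [pd1_petrovA, petrovA_0, petrovA_1, pd_const', dA23 hc, dA32 hc]

/-- The covector of the covariant derivative. -/
def petrovC (c : ℝ → ℝ) (z : Pt 4) : Fin 4 → ℝ := fun a =>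
  pd (fun y => petrovA c y a) 0 z + z 2 / 2 * petrovA c z a - if a = 3 then petrovA c z 3 else 0

lemma covD_petrovF {c : ℝ → ℝ} (hc : Differentiable ℝ c) (x : Pt 4) (idx : Fin 3 → Fin 4) :
    covD petrovG (petrovF c) x idx =
      if idx 0 = 0 then duW (petrovC c) x ![idx 1, idx 2] else 0 := by
  rw [petrovF_eq]
  have s1 : (Fin.succ (0 : Fin 2)) = (1 : Fin 3) := rfl
  have s2 : (Fin.succ (1 : Fin 2)) = (2 : Fin 3) := rfl
  simp only [covD, Fin.sum_univ_two, duW, s1, s2, Function.update_self,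
    Function.update_of_ne (show (1 : Fin 2) ≠ 0 by decide),
    Function.update_of_ne (show (0 : Fin 2) ≠ 1 by decide),
    Matrix.cons_val_zero, Matrix.cons_val_one]
  generalize idx 0 = i
  generalize idx 1 = j
  generalize idx 2 = k
  have hA : ∀ a d, a = 2 ∨ a = 3 → d ≠ 0 → pd (fun y => petrovA c y a) d x =
      christoffel petrovG x 2 d a * petrovA c x 2 + christoffel petrovG x 3 d a * petrovA c x 3 := by
    intro a d ha hd
    rcases ha with rfl | rfl <;> rw [chr2 x _ _ (by decide), chr3 x _ _ (by decide)] <;>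
      fin_cases d <;> simp [pd1_petrovA, dA22 hc, dA23 hc, dA32 hc, dA33 hc] at hd ⊢ <;> ring
  by_cases hj : j = 0 <;> by_cases hk : k = 0
  · subst hj hk
    simp [Fin.sum_univ_four, petrovA_0, petrovA_1, pd_const']
  · subst hj
    have key := fun d => hA k d
    simp [hk, Fin.sum_univ_four, petrovA_0, petrovA_1, chr0]
    fin_cases k
    · exact absurd rfl hk
    · simp [petrovC, petrovA_1, pd_const', chr2, chr3]
    · by_cases hi : i = 0
      · subst hi
        simp [petrovC, chr2, chr3]
      · simp [hi] at key ⊢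
        rw [key i hi]; ring
    · by_cases hi : i = 0
      · subst hi
        simp [petrovC, chr2, chr3]
        ring
      · simp [hi] at key ⊢
        rw [key i hi]; ring
  · subst hk
    have key := fun d => hA j d
    simp [hj, Fin.sum_univ_four, petrovA_0, petrovA_1, chr0, pd_neg']
    fin_cases j
    · exact absurd rfl hj
    · simp [petrovC, petrovA_1, pd_const', chr2, chr3]
    · by_cases hi : i = 0
      · subst hi
        simp [petrovC, chr2, chr3]
        ring
      · simp [hi] at key ⊢
        rw [key i hi]; ring
    · by_cases hi : i = 0
      · subst hi
        simp [petrovC, chr2, chr3]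
        ring
      · simp [hi] at key ⊢
        rw [key i hi]; ring
  · simp [hj, hk, chr0, pd_const', Fin.sum_univ_four]

/-- Levi-Civita symbol in four dimensions. -/
def eps4 (i j k l : Fin 4) : ℤ :=
  let s : Fin 4 → Fin 4 → ℤ := fun a b => if a < b then 1 else if b < a then -1 else 0
  s i j * s i k * s i l * s j k * s j l * s k l

lemma permSign_eq (i j k l : Fin 4) : permSign (fun m => Fin.append ![i, j] ![k, l]
    (Fin.cast (by norm_num : 4 = 2 + 2) m)) = eps4 i j k l := by
  set f : Fin 4 → Fin 4 := fun m => Fin.append ![i, j] ![k, l]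
    (Fin.cast (by norm_num : 4 = 2 + 2) m) with hf
  have f0 : f 0 = i := rfl
  have f1 : f 1 = j := rfl
  have f2 : f 2 = k := rfl
  have f3 : f 3 = l := rfl
  have I0 : Finset.Iio (0 : Fin 4) = ∅ := by decide
  have I1 : Finset.Iio (1 : Fin 4) = {0} := by decide
  have I2 : Finset.Iio (2 : Fin 4) = {0, 1} := by decide
  have I3 : Finset.Iio (3 : Fin 4) = {0, 1, 2} := by decide
  by_cases h : Function.Bijective f
  · have ne : ∀ a b : Fin 4, a ≠ b → ¬ f a < f b → f b < f a := fun a b hab hlt =>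
      lt_of_le_of_ne (not_lt.mp hlt) fun e => hab (h.1 e.symm)
    have key : ∀ a b : Fin 4, a ≠ b → (((if f a < f b then 1 else -1 : ℤˣ)) : ℤ) =
        if f a < f b then 1 else if f b < f a then -1 else 0 := by
      intro a b hab
      by_cases hlt : f a < f b
      · simp [hlt]
      · simp [hlt, ne a b hab hlt]
    unfold permSign
    rw [dif_pos h, Equiv.Perm.sign_eq_prod_prod_Iio]
    simp only [Fin.prod_univ_four, I0, I1, I2, I3, Equiv.ofBijective_apply, Finset.prod_empty]
    rw [Finset.prod_singleton, Finset.prod_insert (by decide), Finset.prod_singleton,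
      Finset.prod_insert (by decide), Finset.prod_insert (by decide), Finset.prod_singleton]
    simp only [Units.val_mul, Units.val_one]
    rw [key 0 1 (by decide), key 0 2 (by decide), key 1 2 (by decide), key 0 3 (by decide),
      key 1 3 (by decide), key 2 3 (by decide)]
    simp only [f0, f1, f2, f3, eps4]
    ring
  · unfold permSign
    rw [dif_neg h]
    have hi : ¬ Function.Injective f := fun hi => h (Finite.injective_iff_bijective.mp hi)
    unfold eps4
    by_contra hne
    apply hi
    have n1 : i ≠ j := by rintro rfl; simp at hne
    have n2 : i ≠ k := by rintro rfl; simp at hne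
    have n3 : i ≠ l := by rintro rfl; simp at hne
    have n4 : j ≠ k := by rintro rfl; simp at hne
    have n5 : j ≠ l := by rintro rfl; simp at hne
    have n6 : k ≠ l := by rintro rfl; simp at hne
    intro a b hab
    fin_cases a <;> fin_cases b <;> simp [f0, f1, f2, f3, n1, n2, n3, n4, n5, n6,
      n1.symm, n2.symm, n3.symm, n4.symm, n5.symm, n6.symm] at hab ⊢

lemma petrov_det (x : Pt 4) : Real.sqrt |(petrovG x).det| = Real.exp (x 2 + x 0) := by
  have : (petrovG x).det = - (Real.exp (x 2 + x 0)) ^ 2 := by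
    rw [← Real.exp_nat_mul]
    simp [Matrix.det_succ_row_zero, Fin.sum_univ_succ, petrovG, Fin.succAbove]
    rw [← Real.exp_add]
    ring_nf
  rw [this, abs_neg, abs_of_nonneg (by positivity), Real.sqrt_sq (by positivity)]

/-- The covector of the Hodge dual. -/
def petrovB (c : ℝ → ℝ) (z : Pt 4) : Fin 4 → ℝ := fun a =>
  if a = 3 then Real.exp (z 0) * petrovA c z 2
  else if a = 2 then - (Real.exp (- z 0) * petrovA c z 3) else 0

lemma raise_F (c : ℝ → ℝ) (x : Pt 4) (i j : Fin 4) : raiseAll petrovG (petrovF c) x ![i, j] =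
    (if i = 1 then petrovInv x j j * petrovA c x j else 0) -
    (if j = 1 then petrovInv x i i * petrovA c x i else 0) := by
  unfold raiseAll
  rw [← (finTwoArrowEquiv (Fin 4)).symm.sum_comp, Fintype.sum_prod_type]
  simp only [petrov_inv, Fin.prod_univ_two, petrovF_eq, duW, finTwoArrowEquiv_symm_apply,
    Matrix.cons_val_zero, Matrix.cons_val_one]
  fin_cases i <;> fin_cases j <;>
    simp [Fin.sum_univ_four, petrovInv, petrovA_0, petrovA_1]

lemma hodge_F (h : 2 + 2 = 4) (c : ℝ → ℝ) : hodge h petrovG (petrovF c) = duW (petrovB c) := by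
  funext x idx
  obtain ⟨k, l, rfl⟩ : ∃ k l, idx = ![k, l] :=
    ⟨idx 0, idx 1, by ext i; fin_cases i <;> rfl⟩
  unfold hodge
  rw [← (finTwoArrowEquiv (Fin 4)).symm.sum_comp, Fintype.sum_prod_type]
  simp only [finTwoArrowEquiv_symm_apply, raise_F, petrov_det, permSign_eq]
  have e1 : Real.exp (-x 2) * Real.exp (x 2 + x 0) = Real.exp (x 0) := by
    rw [← Real.exp_add]; congr 1; ring
  have e2 : Real.exp (-(x 2 + 2 * x 0)) * Real.exp (x 2 + x 0) = Real.exp (- x 0) := by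
    rw [← Real.exp_add]; congr 1; ring
  fin_cases k <;> fin_cases l <;>
    simp [Fin.sum_univ_four, petrovInv, petrovA_0, petrovA_1, eps4, duW, petrovB,
      -neg_add_rev]
  · linear_combination (-petrovA c x 3) * e2
  · linear_combination (petrovA c x 2) * e1
  · linear_combination (petrovA c x 3) * e2
  · linear_combination (petrovA c x 2) * e1

lemma extD_hodge_F (h : 2 + 2 = 4) {c : ℝ → ℝ} (hc : ContDiff ℝ (⊤ : ℕ∞) c) (x : Pt 4)
    (idx : Fin 3 → Fin 4) :
    extD (hodge h petrovG (petrovF c)) x idx = 0 := by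
  have hd : Differentiable ℝ c := hc.differentiable (by simp)
  have hA := fun a => (petrovA_smooth hc a).differentiable (by simp)
  rw [hodge_F]
  apply extD_duW
  have k1 : (fun y => petrovB c y 1) = fun _ => 0 := by funext y; simp [petrovB]
  have k2 : (fun y => petrovB c y 2) = fun z => -(Real.exp (-z 0) * petrovA c z 3) := by
    funext y; simp [petrovB]
  have k3 : (fun y => petrovB c y 3) = fun z => Real.exp (z 0) * petrovA c z 2 := by
    funext y; simp [petrovB]
  have m1 : ∀ x b, pd (fun y => petrovB c y b) 1 x = 0 := by
    intro x b
    apply pd_of_indep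
    intro x x' h
    simp only [petrovB, petrovA, h 0 (by decide), h 2 (by decide), h 3 (by decide)]
  have main : ∀ x, pd (fun y => petrovB c y 3) 2 x = pd (fun y => petrovB c y 2) 3 x := by
    intro x
    rw [k2, k3, pd_neg', pd_mul' (by fun_prop) (hA 2), pd_mul' (by fun_prop) (hA 3),
      pd_exp' (by fun_prop), pd_exp' (by fun_prop), pd_neg', pd_coord, pd_coord, dA22 hd, dA33 hd]
    have : Real.exp (-x 0) * Real.exp (2 * x 0) = Real.exp (x 0) := by
      rw [← Real.exp_add]; congr 1; ring
    simp
    linear_combination (-(1/2) * petrovA c x 2) * this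
  intro x a b ha hb
  have k1' : ∀ b, pd (fun y => petrovB c y 1) b x = 0 := by
    intro b; rw [k1, pd_const']
  fin_cases a <;> fin_cases b <;> simp at ha hb ⊢ <;>
    simp [m1, k1', main]

/-! ### Filtration of the Maxwell field and the main argument -/

lemma petrovA_mem {c : ℝ → ℝ} (hc : ContDiff ℝ (⊤ : ℕ∞) c) {d : ℤ} (hd : 0 ≤ d) (a : Fin 4) :
    (fun z => petrovA c z a) ∈ DR d :=
  DR_zeroDeg (petrovA_smooth hc a) (petrovA_indep c a) hd

lemma petrovC_mem {c : ℝ → ℝ} (hc : ContDiff ℝ (⊤ : ℕ∞) c) {d : ℤ} (hd : 0 ≤ d) (a : Fin 4) :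
    (fun z => petrovC c z a) ∈ DR d := by
  unfold petrovC
  refine Submodule.sub_mem _ (Submodule.add_mem _ ?_ ?_) ?_
  · exact DR_zeroDeg (pd_smooth (petrovA_smooth hc a) 0) (pd_indep (petrovA_indep c a) 0) hd
  · have h := DR_mul (d := 0) (e := d) (f := fun z : Pt 4 => z 2 / 2)
      (DR_zeroDeg (by fun_prop) (indep_of (f := fun _ x _ => x / 2)) le_rfl) (petrovA_mem hc hd a)
    simpa using h
  · by_cases h : a = 3
    · simpa [h] using petrovA_mem hc hd 3
    · simp only [h, if_false]
      exact Submodule.zero_mem _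

lemma petrovC_0 (c : ℝ → ℝ) (z : Pt 4) : petrovC c z 0 = 0 := by
  simp [petrovC, petrovA_0, pd_const']

lemma petrovC_1 (c : ℝ → ℝ) (z : Pt 4) : petrovC c z 1 = 0 := by
  simp [petrovC, petrovA_1, pd_const']

lemma Filt_duW {B : Pt 4 → Fin 4 → ℝ} (h0 : ∀ z, B z 0 = 0) (h1 : ∀ z, B z 1 = 0)
    (h : ∀ (a : Fin 4) (d : ℤ), 0 ≤ d → (fun z => B z a) ∈ DR d) : Filt 1 (duW B) := by
  intro idx
  have key : ∀ i j : Fin 4, (fun z => if i = 0 then B z j else 0) ∈ DR (-1 - (wt i + wt j)) := by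
    intro i j
    by_cases hi : i = 0
    · subst hi
      simp only [if_true]
      by_cases hj : j = 1
      · subst hj
        simp only [h1]
        exact Submodule.zero_mem _
      · apply h
        simp only [wt, hj, if_true, if_false]
        split_ifs <;> norm_num
    · simp only [hi, if_false]
      exact Submodule.zero_mem _
  rw [Fin.sum_univ_two]
  refine Submodule.sub_mem _ (key _ _) ?_
  have := key (idx 1) (idx 0)
  rwa [add_comm] at this

lemma Filt_petrovF {c : ℝ → ℝ} (hc : ContDiff ℝ (⊤ : ℕ∞) c) : Filt 1 (petrovF c) :=
  Filt_duW (petrovA_0 c) (petrovA_1 c) fun a _ hd => petrovA_mem hc hd a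

lemma Filt_covD_petrovF {c : ℝ → ℝ} (hc : ContDiff ℝ (⊤ : ℕ∞) c) :
    Filt 2 (covD petrovG (petrovF c)) := by
  intro idx
  have h := Filt_duW (petrovC_0 c) (petrovC_1 c) (fun a _ hd => petrovC_mem hc hd a)
    ![idx 1, idx 2]
  simp only [covD_petrovF (hc.differentiable (by simp))]
  by_cases hi : idx 0 = 0
  · simp only [hi, if_true]
    refine DR_mono ?_ h
    have e := Fin.sum_univ_three (fun m : Fin 3 => wt (idx m))
    have e' : ∑ m : Fin (2 + 1), wt (idx m) = wt (idx 0) + wt (idx 1) + wt (idx 2) := e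
    rw [e', Fin.sum_univ_two, hi]
    simp [wt]
    omega
  · simp only [hi, if_false]
    exact Submodule.zero_mem _

lemma Filt_iter1 {c : ℝ → ℝ} (hc : ContDiff ℝ (⊤ : ℕ∞) c) (I : ℕ) :
    Filt (if I = 0 then 1 else 2) (covDIter petrovG (petrovF c) I) := by
  cases I with
  | zero => exact Filt_petrovF hc
  | succ I => exact Filt_covDIter' (Filt_covD_petrovF hc) I

lemma Filt_mono {k : ℕ} {s t : ℤ} (h : s ≤ t) {T : TensorField 4 k} (hT : Filt t T) : Filt s T :=
  fun idx => DR_mono (by omega) (hT idx)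

lemma petrov_VSI {c : ℝ → ℝ} (hc : ContDiff ℝ (⊤ : ℕ∞) c) : IsVSI petrovG (petrovF c) := by
  intro I S _ x v
  have h := Filt_value S (fun _ => 1) (fun j => Filt_covDIter (Filt_petrovF hc) (S.ord j)) v
  have hN := S.hN
  have := DR_neg (by simp; omega) h
  exact congrFun this x

lemma petrovF_alt (c : ℝ → ℝ) : IsAlternating (petrovF c) := by
  intro x idx σ
  have h : ∀ σ : Equiv.Perm (Fin 2), σ = 1 ∨ σ = Equiv.swap 0 1 := by decide
  rcases h σ with rfl | rfl
  · simp
  · simp [petrovF]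

lemma scheme_cases {c : ℝ → ℝ} (hc : ContDiff ℝ (⊤ : ℕ∞) c) (S : ConcomScheme 2 2) :
    ∃ t : ℝ, Filt 2 (S.value petrovG (petrovF c) - t • petrovF c) := by
  by_cases hS : S.N = 1 ∧ ∀ j, S.ord j = 0
  · obtain ⟨N, hN, ord, m, slots⟩ := S
    obtain ⟨h1, h2⟩ := hS
    simp only at h1 h2
    subst h1
    obtain rfl : ord = fun _ => 0 := funext h2
    have hm : m = 0 := by
      have := Fintype.card_congr slots
      simp at this
      omega
    subst hm
    let τ0 : Fin 2 → Fin 2 := fun s => Sum.elim (fun p => p.1.elim0) id (slots.symm ⟨0, s⟩)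
    have hτ : ∀ s, slots.symm ⟨0, s⟩ = Sum.inr (τ0 s) := by
      intro s
      rcases h : slots.symm ⟨0, s⟩ with p | q
      · exact p.1.elim0
      · simp [τ0, h]
    have hinj : Function.Injective τ0 := by
      intro s s' h
      have : slots.symm ⟨0, s⟩ = slots.symm ⟨0, s'⟩ := by rw [hτ, hτ, h]
      have := slots.symm.injective this
      simpa using this
    let τ : Equiv.Perm (Fin 2) := Equiv.ofBijective τ0 (Finite.injective_iff_bijective.mp hinj)
    refine ⟨((Equiv.Perm.sign τ : ℤ) : ℝ), ?_⟩
    have e : ConcomScheme.value ⟨1, hN, fun _ => 0, 0, slots⟩ petrovG (petrovF c)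
        - ((Equiv.Perm.sign τ : ℤ) : ℝ) • petrovF c = 0 := by
      funext x free
      have ha := petrovF_alt c x free τ
      simp only [Pi.sub_apply, Pi.smul_apply, smul_eq_mul, ← ha]
      simp only [ConcomScheme.value]
      rw [Fintype.sum_unique]
      simp only [Finset.univ_eq_empty, Finset.prod_empty, one_mul, Fin.prod_univ_one]
      have : ∀ φ : Fin 0 × Bool → Fin 4,
          (fun s => Sum.elim φ free (slots.symm ⟨0, s⟩)) = free ∘ τ := by
        intro φ
        funext s
        rw [hτ]
        rfl
      exact sub_eq_zero.mpr (congrArg (petrovF c x) (this _))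
    rw [e]
    intro idx
    exact Submodule.zero_mem _
  · refine ⟨0, ?_⟩
    rw [zero_smul, sub_zero]
    refine Filt_mono ?_ (Filt_value S (fun j => if S.ord j = 0 then 1 else 2)
      fun j => Filt_iter1 hc (S.ord j))
    have hN := S.hN
    have hge : ∀ j : Fin S.N, (1 : ℤ) ≤ if S.ord j = 0 then 1 else 2 := by
      intro j; split_ifs <;> norm_num
    by_cases h1 : S.N = 1
    · have : ∃ j, S.ord j ≠ 0 := by
        by_contra hcon
        push Not at hcon
        exact hS ⟨h1, hcon⟩
      obtain ⟨j, hj⟩ := this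
      calc (2 : ℤ) = if S.ord j = 0 then 1 else 2 := by simp [hj]
        _ ≤ _ := Finset.single_le_sum (f := fun j => if S.ord j = 0 then (1 : ℤ) else 2)
          (fun i _ => le_trans (by norm_num) (hge i)) (Finset.mem_univ j)
    · calc (2 : ℤ) ≤ ∑ j : Fin S.N, (1 : ℤ) := by simp; omega
        _ ≤ _ := Finset.sum_le_sum fun j _ => hge j

lemma constructed_cases {c : ℝ → ℝ} (hc : ContDiff ℝ (⊤ : ℕ∞) c) (G : TensorField 4 2)
    (hG : IsConstructedFrom petrovG (petrovF c) G) : ∃ t : ℝ, Filt 2 (G - t • petrovF c) := by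
  unfold IsConstructedFrom at hG
  induction hG using Submodule.span_induction with
  | mem G h =>
    obtain ⟨S, rfl⟩ := h
    exact scheme_cases hc S
  | zero =>
    refine ⟨0, ?_⟩
    rw [zero_smul, sub_zero]
    intro idx
    exact Submodule.zero_mem _
  | add G G' _ _ ih ih' =>
    obtain ⟨t, ht⟩ := ih
    obtain ⟨t', ht'⟩ := ih'
    refine ⟨t + t', ?_⟩
    rw [add_smul, add_sub_add_comm]
    intro idx
    exact Submodule.add_mem _ (ht idx) (ht' idx)
  | smul a G _ ih =>
    obtain ⟨t, ht⟩ := ih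
    refine ⟨a * t, ?_⟩
    rw [mul_smul, ← smul_sub]
    intro idx
    exact Submodule.smul_mem _ a (ht idx)

lemma alt_Filt_zero {T : TensorField 4 2} (hT : Filt 2 T) (ha : IsAlternating T) : T = 0 := by
  funext x idx
  by_cases h : idx 0 = 0 ∧ idx 1 = 0
  · have h1 := ha x idx (Equiv.swap 0 1)
    have h2 : idx ∘ (Equiv.swap (0 : Fin 2) 1) = idx := by
      funext i
      fin_cases i <;> simp [h.1, h.2]
    rw [h2] at h1
    simp at h1
    show T x idx = 0
    linarith
  · have := DR_neg (by
      rw [Fin.sum_univ_two]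
      have hw : ∀ a : Fin 4, (-1 ≤ wt a) ∧ (a ≠ 0 → 0 ≤ wt a) := by decide
      rcases not_and_or.mp h with h | h
      · have := (hw _).2 h
        have := (hw (idx 1)).1
        omega
      · have := (hw _).2 h
        have := (hw (idx 0)).1
        omega) (hT idx)
    exact congrFun this x

/-- the 2-form `F = e^{x/2} c(u) du ∧ (−cos(y eᵘ/2) dx + eᵘ sin(y eᵘ/2) dy)`
solves the source-free Maxwell equations on the Petrov type III vacuum background, is
VSI, and is universal (it solves `dF = 0`, `d*F̃ = 0` for any 2-form `F̃` constructed
from `F` and its covariant derivatives). -/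
theorem petrov_maxwell_universal (c : ℝ → ℝ) (hc : ContDiff ℝ (⊤ : ℕ∞) c) :
    MaxwellEqs (by norm_num : 2 + 2 = 4) petrovG (petrovF c) ∧
    IsVSI petrovG (petrovF c) ∧
    (∀ G : TensorField 4 2, IsConstructedFrom petrovG (petrovF c) G → IsAlternating G →
      ∀ x idx, extD (hodge (by norm_num : 2 + 2 = 4) petrovG G) x idx = 0) := by
  refine ⟨⟨fun x idx => extD_petrovF (hc.differentiable (by simp)) x idx,
    fun x idx => extD_hodge_F _ hc x idx⟩, petrov_VSI hc, ?_⟩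
  intro G hG halt x idx
  obtain ⟨t, ht⟩ := constructed_cases hc G hG
  have hz : G - t • petrovF c = 0 := by
    refine alt_Filt_zero ht ?_
    intro x idx σ
    have h1 := halt x idx σ
    have h2 := petrovF_alt c x idx σ
    simp only [Pi.sub_apply, Pi.smul_apply, smul_eq_mul, h1, h2]
    ring
  have hG' : G = petrovF (fun u => t * c u) := by
    rw [sub_eq_zero.mp hz]
    funext x idx
    simp only [Pi.smul_apply, smul_eq_mul, petrovF, petrovA]
    split_ifs <;> ring
  rw [hG']
  exact extD_hodge_F _ (contDiff_const.mul hc) x idx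

end VSI
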